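/- Let C = {(x,y) ∈ ℝ² : 1 ≤ x and |y| ≤ 1 − 1/x}, a closed unbounded subset of ℝ², and let D̄ be the closed unit disk {(x,y) : x² + y² ≤ 1}. Then: (a) for every ε > 0 there exists a rigid motion σ of ℝ² with σ(D̄) ⊆ (1+ε)C = {(1+ε)z : z ∈ C}; but (b) there is no rigid motion σ of ℝ² with σ(D̄) ⊆ C. (Hence the compactness hypothesis in the homothety packing theorem cannot be weakened to closedness.) -/

import Mathlib

open Pointwise

noncomputable section

/-- The rigid motion `(θ, ξ)` acting on a point of `ℝ²`: `x ↦ ξ + θx`. -/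
def rmApply (θ : Matrix (Fin 2) (Fin 2) ℝ) (ξ : EuclideanSpace ℝ (Fin 2))
    (x : EuclideanSpace ℝ (Fin 2)) : EuclideanSpace ℝ (Fin 2) :=
  ξ + (EuclideanSpace.equiv (Fin 2) ℝ).symm (θ.mulVec (EuclideanSpace.equiv (Fin 2) ℝ x))

/-- The closed unbounded region `{(x, y) : 1 ≤ x, |y| ≤ 1 − 1/x}` of `ℝ²`. -/
def hornRegion : Set (EuclideanSpace ℝ (Fin 2)) :=
  {p | 1 ≤ p 0 ∧ |p 1| ≤ 1 - 1 / p 0}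

/-!
A rigid motion carries the disk of radius `r` around `0` to the disk of radius `r` around the
translation vector, so rotations play no role. The region `cC` lies in the open strip `|y| < c`,
which has no room for a disk of radius `c`; but its half-width `c - c² / x` tends to `c` as
`x → ∞`, so every disk of smaller radius fits far enough to the right.
-/

open Metric

theorem rmApply_zero (θ : Matrix (Fin 2) (Fin 2) ℝ) (ξ : EuclideanSpace ℝ (Fin 2)) :
    rmApply θ ξ 0 = ξ := by
  simp [rmApply]

theorem rmApply_image_closedBall {θ : Matrix (Fin 2) (Fin 2) ℝ}
    (hθ : θ ∈ Matrix.orthogonalGroup (Fin 2) ℝ) (ξ x : EuclideanSpace ℝ (Fin 2)) (r : ℝ) :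
    rmApply θ ξ '' closedBall x r = closedBall (rmApply θ ξ x) r :=
  let rotation := Unitary.linearIsometryEquiv
    ⟨Matrix.toEuclideanCLM (𝕜 := ℝ) θ, Unitary.map_mem Matrix.toEuclideanCLM hθ⟩
  (rotation.toIsometryEquiv.trans (IsometryEquiv.addLeft ξ)).image_closedBall x r

theorem exists_rmApply_image_closedBall_subset_iff {S : Set (EuclideanSpace ℝ (Fin 2))} {r : ℝ} :
    (∃ (θ : Matrix (Fin 2) (Fin 2) ℝ) (ξ : EuclideanSpace ℝ (Fin 2)),
      θ ∈ Matrix.orthogonalGroup (Fin 2) ℝ ∧ rmApply θ ξ '' closedBall 0 r ⊆ S) ↔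
      ∃ ξ, closedBall ξ r ⊆ S := by
  constructor
  · rintro ⟨θ, ξ, hθ, hS⟩
    rw [rmApply_image_closedBall hθ, rmApply_zero] at hS
    exact ⟨ξ, hS⟩
  · rintro ⟨ξ, hS⟩
    refine ⟨1, ξ, one_mem _, ?_⟩
    rwa [rmApply_image_closedBall (one_mem _), rmApply_zero]

theorem mem_smul_hornRegion_iff {c : ℝ} (hc : 0 < c) {p : EuclideanSpace ℝ (Fin 2)} :
    p ∈ c • hornRegion ↔ c ≤ p 0 ∧ |p 1| ≤ c - c ^ 2 / p 0 := by
  have hx : 1 ≤ c⁻¹ * p 0 ↔ c ≤ p 0 := by rw [le_inv_mul_iff₀ hc, mul_one]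
  have hy : |c⁻¹ * p 1| ≤ 1 - 1 / (c⁻¹ * p 0) ↔ |p 1| ≤ c - c ^ 2 / p 0 := by
    rw [abs_mul, abs_of_pos (inv_pos.2 hc), inv_mul_le_iff₀ hc]
    field_simp
  rw [Set.mem_smul_set_iff_inv_smul_mem₀ hc.ne']
  exact and_congr hx hy

theorem abs_snd_lt_of_mem_smul_hornRegion {c : ℝ} (hc : 0 < c) {p : EuclideanSpace ℝ (Fin 2)}
    (hp : p ∈ c • hornRegion) : |p 1| < c := by
  obtain ⟨hx, hy⟩ := (mem_smul_hornRegion_iff hc).1 hp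
  have hx_pos : 0 < p 0 := hc.trans_le hx
  exact hy.trans_lt (sub_lt_self c (by positivity))

theorem lt_of_closedBall_subset_smul_hornRegion {c r : ℝ} (hc : 0 < c)
    {ξ : EuclideanSpace ℝ (Fin 2)} (h : closedBall ξ r ⊆ c • hornRegion) : r < c := by
  by_contra! hcr
  set v : EuclideanSpace ℝ (Fin 2) := EuclideanSpace.single 1 c
  have hv : ‖v‖ ≤ r := by simpa [v, abs_of_pos hc] using hcr
  have h_top : |(ξ + v) 1| < c :=
    abs_snd_lt_of_mem_smul_hornRegion hc (h (by simpa [mem_closedBall_iff_norm] using hv))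
  have h_bottom : |(ξ - v) 1| < c :=
    abs_snd_lt_of_mem_smul_hornRegion hc (h (by simpa [mem_closedBall_iff_norm] using hv))
  have h_add : (ξ + v) 1 = ξ 1 + c := by simp [v]
  have h_sub : (ξ - v) 1 = ξ 1 - c := by simp [v]
  rw [h_add] at h_top
  rw [h_sub] at h_bottom
  linarith [(abs_lt.1 h_top).2, (abs_lt.1 h_bottom).1]

theorem mem_smul_hornRegion_of_abs_snd_le {c r : ℝ} (hc : 0 < c) (hr : r < c)
    {p : EuclideanSpace ℝ (Fin 2)} (hx : c ≤ p 0) (hx' : c ^ 2 / (c - r) ≤ p 0)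
    (hy : |p 1| ≤ r) : p ∈ c • hornRegion := by
  have hgap : c ^ 2 / p 0 ≤ c - r := (div_le_comm₀ (sub_pos.2 hr) (hc.trans_le hx)).1 hx'
  exact (mem_smul_hornRegion_iff hc).2 ⟨hx, by linarith⟩

theorem exists_closedBall_subset_smul_hornRegion {c r : ℝ} (hc : 0 < c) (hr : r < c) :
    ∃ ξ, closedBall ξ r ⊆ c • hornRegion := by
  refine ⟨!₂[r + max c (c ^ 2 / (c - r)), 0], fun p hp => ?_⟩
  have hcoord (i : Fin 2) := (PiLp.norm_apply_le _ i).trans (mem_closedBall_iff_norm.1 hp)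
  have hx : |p 0 - (r + max c (c ^ 2 / (c - r)))| ≤ r := hcoord 0
  have hy : |p 1| ≤ r := by simpa using hcoord 1
  have hmax : max c (c ^ 2 / (c - r)) ≤ p 0 := by linarith [(abs_le.1 hx).1]
  exact mem_smul_hornRegion_of_abs_snd_le hc hr (le_of_max_le_left hmax)
    (le_of_max_le_right hmax) hy

theorem closed_unbounded_counterexample_general {c r : ℝ} (hc : 0 < c) :
    (∃ (θ : Matrix (Fin 2) (Fin 2) ℝ) (ξ : EuclideanSpace ℝ (Fin 2)),
      θ ∈ Matrix.orthogonalGroup (Fin 2) ℝ ∧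
      rmApply θ ξ '' closedBall 0 r ⊆ c • hornRegion) ↔ r < c := by
  rw [exists_rmApply_image_closedBall_subset_iff]
  exact ⟨fun ⟨_, h⟩ => lt_of_closedBall_subset_smul_hornRegion hc h,
    exists_closedBall_subset_smul_hornRegion hc⟩

/-- **The counterexample showing compactness cannot be weakened to closedness.** For the
closed unbounded set `C = {(x, y) : 1 ≤ x, |y| ≤ 1 − 1/x}` and the closed unit disk `D̄`:
(a) for every `ε > 0` some rigid motion carries `D̄` into `(1 + ε)C`, but (b) no rigid
motion carries `D̄` into `C`. -/
theorem closed_unbounded_counterexample :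
    (∀ ε : ℝ, 0 < ε →
      ∃ (θ : Matrix (Fin 2) (Fin 2) ℝ) (ξ : EuclideanSpace ℝ (Fin 2)),
        θ ∈ Matrix.orthogonalGroup (Fin 2) ℝ ∧
        rmApply θ ξ '' Metric.closedBall (0 : EuclideanSpace ℝ (Fin 2)) 1 ⊆
          (1 + ε) • hornRegion) ∧
    ¬ ∃ (θ : Matrix (Fin 2) (Fin 2) ℝ) (ξ : EuclideanSpace ℝ (Fin 2)),
        θ ∈ Matrix.orthogonalGroup (Fin 2) ℝ ∧
        rmApply θ ξ '' Metric.closedBall (0 : EuclideanSpace ℝ (Fin 2)) 1 ⊆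
          hornRegion := by
  refine ⟨fun ε hε => (closed_unbounded_counterexample_general (by linarith)).2 (by linarith), ?_⟩
  simpa only [one_smul] using
    (closed_unbounded_counterexample_general one_pos).not.2 (lt_irrefl (1 : ℝ))
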